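/- There exists a state ρ^{ABCD} of a quadripartite quantum system on finite-dimensional Hilbert spaces satisfying all three constraints I(A;C|B) = 0, I(C;B|A) = 0 and I(A;B|D) = 0 for which the inequality of the main theorem is tight with nonzero value: I(C;D) = I(C;AB) > 0. For instance, any state of the form ρ^{ABCD} = ⊕_j q_j · ρ_j^A ⊗ σ_j^B ⊗ τ_j^C ⊗ ζ_j^D with the states τ_j^C mutually orthogonal (and at least two sectors with q_j > 0) has this property. -/

import Mathlib

/-!
A classical mixture `∑ j, q j |a j, b j, c j, d j⟩⟨a j, b j, c j, d j|` has diagonal marginals: the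
mixtures over the corresponding sublists of labels. A group of parties one of whose labels is
injective in `j` therefore has the full Shannon entropy `H(q)`. If each of `A`, `B`, `D` knows `j`,
the three conditional mutual informations become `H(q) + H(q) - H(q) - H(q) = 0`, and both `I(C;D)`
and `I(C;AB)` reduce to `S(C)`, which is `H(q)` when `C` knows `j` too.
-/

open scoped BigOperators ComplexOrder

/-- Von Neumann entropy (base 2) of a matrix: for a Hermitian matrix, the Shannon
entropy of its eigenvalues; junk value `0` for non-Hermitian matrices. -/
noncomputable def vNEntropy {n : Type*} [Fintype n] [DecidableEq n] (M : Matrix n n ℂ) : ℝ :=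
  if h : M.IsHermitian then -∑ i, (h.eigenvalues i) * Real.logb 2 (h.eigenvalues i) else 0

/-- A density matrix: positive semidefinite with trace one. -/
def IsState {n : Type*} [Fintype n] [DecidableEq n] (M : Matrix n n ℂ) : Prop :=
  M.PosSemidef ∧ M.trace = 1

section Quad

variable {A B C D : Type*} [Fintype A] [DecidableEq A] [Fintype B] [DecidableEq B]
  [Fintype C] [DecidableEq C] [Fintype D] [DecidableEq D]
  (ρ : Matrix (A × B × C × D) (A × B × C × D) ℂ)

/-- Entropies of the 15 marginals of a quadripartite state. -/
noncomputable def SA : ℝ :=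
  vNEntropy (Matrix.of fun a a' : A => ∑ b, ∑ c, ∑ d, ρ (a, b, c, d) (a', b, c, d))
noncomputable def SB : ℝ :=
  vNEntropy (Matrix.of fun b b' : B => ∑ a, ∑ c, ∑ d, ρ (a, b, c, d) (a, b', c, d))
noncomputable def SC : ℝ :=
  vNEntropy (Matrix.of fun c c' : C => ∑ a, ∑ b, ∑ d, ρ (a, b, c, d) (a, b, c', d))
noncomputable def SD : ℝ :=
  vNEntropy (Matrix.of fun d d' : D => ∑ a, ∑ b, ∑ c, ρ (a, b, c, d) (a, b, c, d'))
noncomputable def SAB : ℝ :=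
  vNEntropy (Matrix.of fun p q : A × B => ∑ c, ∑ d, ρ (p.1, p.2, c, d) (q.1, q.2, c, d))
noncomputable def SAC : ℝ :=
  vNEntropy (Matrix.of fun p q : A × C => ∑ b, ∑ d, ρ (p.1, b, p.2, d) (q.1, b, q.2, d))
noncomputable def SAD : ℝ :=
  vNEntropy (Matrix.of fun p q : A × D => ∑ b, ∑ c, ρ (p.1, b, c, p.2) (q.1, b, c, q.2))
noncomputable def SBC : ℝ :=
  vNEntropy (Matrix.of fun p q : B × C => ∑ a, ∑ d, ρ (a, p.1, p.2, d) (a, q.1, q.2, d))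
noncomputable def SBD : ℝ :=
  vNEntropy (Matrix.of fun p q : B × D => ∑ a, ∑ c, ρ (a, p.1, c, p.2) (a, q.1, c, q.2))
noncomputable def SCD : ℝ :=
  vNEntropy (Matrix.of fun p q : C × D => ∑ a, ∑ b, ρ (a, b, p.1, p.2) (a, b, q.1, q.2))
noncomputable def SABC : ℝ :=
  vNEntropy (Matrix.of fun p q : A × B × C =>
    ∑ d, ρ (p.1, p.2.1, p.2.2, d) (q.1, q.2.1, q.2.2, d))
noncomputable def SABD : ℝ :=
  vNEntropy (Matrix.of fun p q : A × B × D =>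
    ∑ c, ρ (p.1, p.2.1, c, p.2.2) (q.1, q.2.1, c, q.2.2))
noncomputable def SACD : ℝ :=
  vNEntropy (Matrix.of fun p q : A × C × D =>
    ∑ b, ρ (p.1, b, p.2.1, p.2.2) (q.1, b, q.2.1, q.2.2))
noncomputable def SBCD : ℝ :=
  vNEntropy (Matrix.of fun p q : B × C × D =>
    ∑ a, ρ (a, p.1, p.2.1, p.2.2) (a, q.1, q.2.1, q.2.2))
noncomputable def SABCD : ℝ := vNEntropy ρ

end Quad

section ShannonEntropy

/-- The Shannon entropy, in bits, of a finite family of weights; a zero weight contributes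
`0 * Real.logb 2 0 = 0`. -/
noncomputable def shannonEntropy {n : Type*} [Fintype n] (p : n → ℝ) : ℝ :=
  -∑ i, p i * Real.logb 2 (p i)

/-- The pushforward of the weights `q` along `e`: the distribution of the label `e j` when `j` is
drawn according to `q`. -/
def pushforward {J n : Type*} [Fintype J] [DecidableEq n] (q : J → ℝ) (e : J → n) (x : n) : ℝ :=
  ∑ j with e j = x, q j

variable {J m n k : Type*} [Fintype J] [DecidableEq m] [DecidableEq n] {q : J → ℝ}

theorem shannonEntropy_pos (hq : ∀ j, 0 ≤ q j) (hsum : ∑ j, q j = 1) {i₁ i₂ : J} (hne : i₁ ≠ i₂)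
    (h₁ : 0 < q i₁) (h₂ : 0 < q i₂) : 0 < shannonEntropy q := by
  have hle_one (j : J) : q j ≤ 1 :=
    hsum ▸ Finset.single_le_sum (fun j _ => hq j) (Finset.mem_univ j)
  have hlt_one : q i₁ < 1 := by
    classical
    calc q i₁ < q i₁ + q i₂ := lt_add_of_pos_right _ h₂
      _ = ∑ j ∈ {i₁, i₂}, q j := (Finset.sum_pair hne).symm
      _ ≤ ∑ j, q j := Finset.sum_le_univ_sum_of_nonneg hq
      _ = 1 := hsum
  rw [shannonEntropy, neg_pos]
  refine Finset.sum_neg' (fun j _ => ?_) ⟨i₁, Finset.mem_univ _, ?_⟩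
  · exact mul_nonpos_of_nonneg_of_nonpos (hq j)
      (Real.logb_nonpos one_lt_two (hq j) (hle_one j))
  · exact mul_neg_of_pos_of_neg h₁ (Real.logb_neg one_lt_two h₁ hlt_one)

theorem pushforward_nonneg (hq : ∀ j, 0 ≤ q j) (e : J → n) (x : n) : 0 ≤ pushforward q e x :=
  Finset.sum_nonneg fun j _ => hq j

theorem sum_pushforward [Fintype n] (q : J → ℝ) (e : J → n) :
    ∑ x, pushforward q e x = ∑ j, q j :=
  Finset.sum_fiberwise _ _ _

theorem sum_pushforward_apply [Fintype k] {g : m → k → n} (hg : Function.Injective2 g)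
    (q : J → ℝ) (f : J → m) (h : J → k) (x : m) :
    ∑ z, pushforward q (fun j => g (f j) (h j)) (g x z) = pushforward q f x := by
  classical
  simp only [pushforward, hg.eq_iff, ← Finset.filter_filter]
  exact Finset.sum_fiberwise _ _ _

theorem shannonEntropy_pushforward [Fintype n] (q : J → ℝ) {e : J → n}
    (he : Function.Injective e) : shannonEntropy (pushforward q e) = shannonEntropy q := by
  have hrange (j : J) : pushforward q e (e j) = q j := by
    classical simp [pushforward, he.eq_iff, Finset.sum_filter]
  have hcompl (x : n) (hx : x ∉ Set.range e) : pushforward q e x = 0 :=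
    Finset.sum_eq_zero fun j hj => absurd ⟨j, (Finset.mem_filter.mp hj).2⟩ hx
  unfold shannonEntropy
  congr 1
  refine (Fintype.sum_of_injective e he _ _ (fun x hx => ?_) fun j => ?_).symm
  · rw [hcompl x hx, zero_mul]
  · rw [hrange]

theorem shannonEntropy_pushforward_prodMk_of_left [Fintype m] [Fintype n] (q : J → ℝ)
    {e : J → m} (he : Function.Injective e) (f : J → n) :
    shannonEntropy (pushforward q fun j => (e j, f j)) = shannonEntropy q :=
  shannonEntropy_pushforward q (Function.Injective.of_comp (f := Prod.fst) he)

theorem shannonEntropy_pushforward_prodMk_of_right [Fintype m] [Fintype n] (q : J → ℝ)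
    (e : J → m) {f : J → n} (hf : Function.Injective f) :
    shannonEntropy (pushforward q fun j => (e j, f j)) = shannonEntropy q :=
  shannonEntropy_pushforward q (Function.Injective.of_comp (f := Prod.snd) hf)

end ShannonEntropy

theorem vNEntropy_diagonal {n : Type*} [Fintype n] [DecidableEq n] (p : n → ℝ) :
    vNEntropy (Matrix.diagonal fun i => (p i : ℂ)) = shannonEntropy p := by
  have hherm : (Matrix.diagonal fun i => (p i : ℂ)).IsHermitian :=
    Matrix.isHermitian_diagonal_of_self_adjoint _ (funext fun i => Complex.conj_ofReal (p i))
  -- Both multisets are the roots of the characteristic polynomial.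
  have hspec : Finset.univ.val.map (fun i => (p i : ℂ)) =
      Finset.univ.val.map fun i => (hherm.eigenvalues i : ℂ) := by
    have hroots := hherm.roots_charpoly_eq_eigenvalues
    rw [Matrix.charpoly_diagonal, Polynomial.roots_prod _ _
      (Finset.prod_ne_zero_iff.mpr fun i _ => Polynomial.X_sub_C_ne_zero _)] at hroots
    simpa only [Polynomial.roots_X_sub_C, Multiset.bind_singleton, Function.comp_def,
      Complex.coe_algebraMap, RCLike.ofReal_eq_complex_ofReal] using hroots
  have hsum := congrArg
    (fun s : Multiset ℂ => (s.map fun z => z.re * Real.logb 2 z.re).sum) hspec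
  simp only [Multiset.map_map, Function.comp_def, Complex.ofReal_re] at hsum
  rw [vNEntropy, dif_pos hherm, shannonEntropy]
  exact congrArg Neg.neg hsum.symm

section ClassicalMixture

/-- The classical mixture `∑ j, q j |e j⟩⟨e j|` of computational basis states, as a diagonal matrix;
labels `e j` that coincide have their weights added. -/
noncomputable def classicalMixture {J n : Type*} [Fintype J] [DecidableEq n] (q : J → ℝ)
    (e : J → n) : Matrix n n ℂ :=
  Matrix.diagonal fun x => (pushforward q e x : ℂ)

variable {J m n k : Type*} [Fintype J] [DecidableEq m] [DecidableEq n] [Fintype k]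

theorem isState_classicalMixture [Fintype n] {q : J → ℝ} (hq : ∀ j, 0 ≤ q j) (hsum : ∑ j, q j = 1)
    (e : J → n) : IsState (classicalMixture q e) := by
  constructor
  · exact Matrix.posSemidef_diagonal_iff.mpr fun x =>
      Complex.zero_le_real.mpr (pushforward_nonneg hq e x)
  · rw [classicalMixture, Matrix.trace_diagonal, ← Complex.ofReal_sum, sum_pushforward, hsum,
      Complex.ofReal_one]

theorem partialTrace_classicalMixture {g : m → k → n} (hg : Function.Injective2 g) (q : J → ℝ)
    (f : J → m) (h : J → k) :
    (Matrix.of fun x y => ∑ z, classicalMixture q (fun j => g (f j) (h j)) (g x z) (g y z)) =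
      classicalMixture q f := by
  ext x y
  by_cases hxy : x = y
  · subst hxy
    simp only [classicalMixture, Matrix.of_apply, Matrix.diagonal_apply_eq]
    rw [← Complex.ofReal_sum, sum_pushforward_apply hg]
  · simp [classicalMixture, hg.eq_iff, hxy]

theorem vNEntropy_partialTrace_classicalMixture [Fintype m] {g : m → k → n}
    (hg : Function.Injective2 g) (q : J → ℝ) (f : J → m) (h : J → k) :
    vNEntropy (Matrix.of fun x y =>
      ∑ z, classicalMixture q (fun j => g (f j) (h j)) (g x z) (g y z)) =
      shannonEntropy (pushforward q f) := by
  rw [partialTrace_classicalMixture hg, classicalMixture, vNEntropy_diagonal]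

end ClassicalMixture

section Quadripartite

/-- The quadripartite classical mixture `∑ j, q j |a j, b j, c j, d j⟩⟨a j, b j, c j, d j|`. -/
noncomputable abbrev quadMixture {J A B C D : Type*} [Fintype J] [DecidableEq A] [DecidableEq B]
    [DecidableEq C] [DecidableEq D] (q : J → ℝ) (a : J → A) (b : J → B) (c : J → C) (d : J → D) :
    Matrix (A × B × C × D) (A × B × C × D) ℂ :=
  classicalMixture q fun j => (a j, b j, c j, d j)

variable {J A B C D : Type*} [Fintype J] [Fintype A] [DecidableEq A] [Fintype B] [DecidableEq B]
  [Fintype C] [DecidableEq C] [Fintype D] [DecidableEq D]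
  (q : J → ℝ) (a : J → A) (b : J → B) (c : J → C) (d : J → D)

theorem SA_quadMixture :
    SA (quadMixture q a b c d) = shannonEntropy (pushforward q a) := by
  simp only [SA, ← Fintype.sum_prod_type']
  exact vNEntropy_partialTrace_classicalMixture
    (g := fun (x : A) (z : B × C × D) => (x, z.1, z.2.1, z.2.2))
    (fun _ _ _ _ => by grind) q a (fun j => (b j, c j, d j))

theorem SB_quadMixture :
    SB (quadMixture q a b c d) = shannonEntropy (pushforward q b) := by
  simp only [SB, ← Fintype.sum_prod_type']
  exact vNEntropy_partialTrace_classicalMixture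
    (g := fun (x : B) (z : A × C × D) => (z.1, x, z.2.1, z.2.2))
    (fun _ _ _ _ => by grind) q b (fun j => (a j, c j, d j))

theorem SC_quadMixture :
    SC (quadMixture q a b c d) = shannonEntropy (pushforward q c) := by
  simp only [SC, ← Fintype.sum_prod_type']
  exact vNEntropy_partialTrace_classicalMixture
    (g := fun (x : C) (z : A × B × D) => (z.1, z.2.1, x, z.2.2))
    (fun _ _ _ _ => by grind) q c (fun j => (a j, b j, d j))

theorem SD_quadMixture :
    SD (quadMixture q a b c d) = shannonEntropy (pushforward q d) := by
  simp only [SD, ← Fintype.sum_prod_type']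
  exact vNEntropy_partialTrace_classicalMixture
    (g := fun (x : D) (z : A × B × C) => (z.1, z.2.1, z.2.2, x))
    (fun _ _ _ _ => by grind) q d (fun j => (a j, b j, c j))

theorem SAB_quadMixture :
    SAB (quadMixture q a b c d) = shannonEntropy (pushforward q fun j => (a j, b j)) := by
  simp only [SAB, ← Fintype.sum_prod_type']
  exact vNEntropy_partialTrace_classicalMixture
    (g := fun (x : A × B) (z : C × D) => (x.1, x.2, z.1, z.2))
    (fun _ _ _ _ => by grind) q (fun j => (a j, b j)) (fun j => (c j, d j))

theorem SAC_quadMixture :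
    SAC (quadMixture q a b c d) = shannonEntropy (pushforward q fun j => (a j, c j)) := by
  simp only [SAC, ← Fintype.sum_prod_type']
  exact vNEntropy_partialTrace_classicalMixture
    (g := fun (x : A × C) (z : B × D) => (x.1, z.1, x.2, z.2))
    (fun _ _ _ _ => by grind) q (fun j => (a j, c j)) (fun j => (b j, d j))

theorem SAD_quadMixture :
    SAD (quadMixture q a b c d) = shannonEntropy (pushforward q fun j => (a j, d j)) := by
  simp only [SAD, ← Fintype.sum_prod_type']
  exact vNEntropy_partialTrace_classicalMixture
    (g := fun (x : A × D) (z : B × C) => (x.1, z.1, z.2, x.2))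
    (fun _ _ _ _ => by grind) q (fun j => (a j, d j)) (fun j => (b j, c j))

theorem SBC_quadMixture :
    SBC (quadMixture q a b c d) = shannonEntropy (pushforward q fun j => (b j, c j)) := by
  simp only [SBC, ← Fintype.sum_prod_type']
  exact vNEntropy_partialTrace_classicalMixture
    (g := fun (x : B × C) (z : A × D) => (z.1, x.1, x.2, z.2))
    (fun _ _ _ _ => by grind) q (fun j => (b j, c j)) (fun j => (a j, d j))

theorem SBD_quadMixture :
    SBD (quadMixture q a b c d) = shannonEntropy (pushforward q fun j => (b j, d j)) := by
  simp only [SBD, ← Fintype.sum_prod_type']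
  exact vNEntropy_partialTrace_classicalMixture
    (g := fun (x : B × D) (z : A × C) => (z.1, x.1, z.2, x.2))
    (fun _ _ _ _ => by grind) q (fun j => (b j, d j)) (fun j => (a j, c j))

theorem SCD_quadMixture :
    SCD (quadMixture q a b c d) = shannonEntropy (pushforward q fun j => (c j, d j)) := by
  simp only [SCD, ← Fintype.sum_prod_type']
  exact vNEntropy_partialTrace_classicalMixture
    (g := fun (x : C × D) (z : A × B) => (z.1, z.2, x.1, x.2))
    (fun _ _ _ _ => by grind) q (fun j => (c j, d j)) (fun j => (a j, b j))

theorem SABC_quadMixture :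
    SABC (quadMixture q a b c d) = shannonEntropy (pushforward q fun j => (a j, b j, c j)) :=
  vNEntropy_partialTrace_classicalMixture
    (g := fun (x : A × B × C) (z : D) => (x.1, x.2.1, x.2.2, z))
    (fun _ _ _ _ => by grind) q (fun j => (a j, b j, c j)) d

theorem SABD_quadMixture :
    SABD (quadMixture q a b c d) = shannonEntropy (pushforward q fun j => (a j, b j, d j)) :=
  vNEntropy_partialTrace_classicalMixture
    (g := fun (x : A × B × D) (z : C) => (x.1, x.2.1, z, x.2.2))
    (fun _ _ _ _ => by grind) q (fun j => (a j, b j, d j)) c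

variable {a b c d}

theorem condMutualInfo_A_C_B_quadMixture_eq_zero (hb : Function.Injective b) :
    SAB (quadMixture q a b c d) + SBC (quadMixture q a b c d) -
      SABC (quadMixture q a b c d) - SB (quadMixture q a b c d) = 0 := by
  have hbc : Function.Injective fun j => (b j, c j) := .of_comp (f := Prod.fst) hb
  rw [SAB_quadMixture, SBC_quadMixture, SABC_quadMixture, SB_quadMixture,
    shannonEntropy_pushforward_prodMk_of_right q a hb,
    shannonEntropy_pushforward_prodMk_of_left q hb c,
    shannonEntropy_pushforward_prodMk_of_right q a hbc, shannonEntropy_pushforward q hb]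
  ring

theorem condMutualInfo_C_B_A_quadMixture_eq_zero (ha : Function.Injective a) :
    SAC (quadMixture q a b c d) + SAB (quadMixture q a b c d) -
      SABC (quadMixture q a b c d) - SA (quadMixture q a b c d) = 0 := by
  rw [SAC_quadMixture, SAB_quadMixture, SABC_quadMixture, SA_quadMixture,
    shannonEntropy_pushforward_prodMk_of_left q ha c,
    shannonEntropy_pushforward_prodMk_of_left q ha b,
    shannonEntropy_pushforward_prodMk_of_left q ha (fun j => (b j, c j)),
    shannonEntropy_pushforward q ha]
  ring

theorem condMutualInfo_A_B_D_quadMixture_eq_zero (hd : Function.Injective d) :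
    SAD (quadMixture q a b c d) + SBD (quadMixture q a b c d) -
      SABD (quadMixture q a b c d) - SD (quadMixture q a b c d) = 0 := by
  have hbd : Function.Injective fun j => (b j, d j) := .of_comp (f := Prod.snd) hd
  rw [SAD_quadMixture, SBD_quadMixture, SABD_quadMixture, SD_quadMixture,
    shannonEntropy_pushforward_prodMk_of_right q a hd,
    shannonEntropy_pushforward_prodMk_of_right q b hd,
    shannonEntropy_pushforward_prodMk_of_right q a hbd, shannonEntropy_pushforward q hd]
  ring

theorem mutualInfo_C_D_quadMixture (hd : Function.Injective d) :
    SC (quadMixture q a b c d) + SD (quadMixture q a b c d) -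
      SCD (quadMixture q a b c d) = SC (quadMixture q a b c d) := by
  rw [SD_quadMixture, SCD_quadMixture, shannonEntropy_pushforward q hd,
    shannonEntropy_pushforward_prodMk_of_right q c hd, add_sub_cancel_right]

theorem mutualInfo_C_AB_quadMixture (ha : Function.Injective a) :
    SC (quadMixture q a b c d) + SAB (quadMixture q a b c d) -
      SABC (quadMixture q a b c d) = SC (quadMixture q a b c d) := by
  rw [SAB_quadMixture, SABC_quadMixture,
    shannonEntropy_pushforward_prodMk_of_left q ha b,
    shannonEntropy_pushforward_prodMk_of_left q ha (fun j => (b j, c j)), add_sub_cancel_right]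

theorem SC_quadMixture_pos {q : J → ℝ} (hq : ∀ j, 0 ≤ q j) (hsum : ∑ j, q j = 1) {i₁ i₂ : J}
    (hne : i₁ ≠ i₂) (h₁ : 0 < q i₁) (h₂ : 0 < q i₂) (hc : Function.Injective c) :
    0 < SC (quadMixture q a b c d) := by
  rw [SC_quadMixture, shannonEntropy_pushforward q hc]
  exact shannonEntropy_pos hq hsum hne h₁ h₂

end Quadripartite

/-- **Remark (the inequality can be tight with nonzero value).** There is a
quadripartite state satisfying all three constraints `I(A;C|B) = 0`,
`I(C;B|A) = 0`, `I(A;B|D) = 0` with `I(C;D) = I(C;AB) > 0`. -/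
theorem exists_state_tight_inequality :
    ∃ (dA dB dC dD : ℕ)
      (ρ : Matrix (Fin dA × Fin dB × Fin dC × Fin dD)
                  (Fin dA × Fin dB × Fin dC × Fin dD) ℂ),
      IsState ρ ∧
      SAB ρ + SBC ρ - SABC ρ - SB ρ = 0 ∧
      SAC ρ + SAB ρ - SABC ρ - SA ρ = 0 ∧
      SAD ρ + SBD ρ - SABD ρ - SD ρ = 0 ∧
      SC ρ + SD ρ - SCD ρ = SC ρ + SAB ρ - SABC ρ ∧
      0 < SC ρ + SAB ρ - SABC ρ := by
  let q : Fin 2 → ℝ := fun _ => 1 / 2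
  have hq (j : Fin 2) : 0 < q j := one_half_pos
  have hq_nonneg (j : Fin 2) : 0 ≤ q j := (hq j).le
  have hsum : ∑ j, q j = 1 := by simp [q]
  have hid : Function.Injective (id : Fin 2 → Fin 2) := Function.injective_id
  refine ⟨2, 2, 2, 2, quadMixture q id id id id, isState_classicalMixture hq_nonneg hsum _,
    condMutualInfo_A_C_B_quadMixture_eq_zero q hid,
    condMutualInfo_C_B_A_quadMixture_eq_zero q hid,
    condMutualInfo_A_B_D_quadMixture_eq_zero q hid, ?_, ?_⟩
  · rw [mutualInfo_C_D_quadMixture q hid, mutualInfo_C_AB_quadMixture q hid]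
  · rw [mutualInfo_C_AB_quadMixture q hid]
    exact SC_quadMixture_pos hq_nonneg hsum zero_ne_one (hq 0) (hq 1) hid
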